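/- Consider a tensor game with tensor constraints in which each cost A_i[·]x is multilinear, and suppose O_i = ∅ for all i (no constraints), so that the game reduces to an ordinary tensor game; then an equilibrium exists, i.e., there exists x* with each x_i* ∈ Δ^{m_i-1} such that A_i[·](x_i*, x*_{¬i}) ≤ A_i[·](x_i, x*_{¬i}) for all x_i ∈ Δ^{m_i-1} and all i. -/

import Mathlib

/-!
The Nikaido–Isoda function `φ x y`, which adds up what the players save by deviating unilaterally
from `x` to their strategies in `y`, is concave in `y`, continuous in `x` and zero on the diagonal.
Ky Fan's inequality gives an `x` with `φ x y ≤ 0` for all `y`, and letting `y` differ from `x` in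
one block only shows that `x` is an equilibrium.

Compactness reduces Ky Fan's inequality to finitely many `y`, where it is an instance of the
Knaster–Kuratowski–Mazurkiewicz lemma. That lemma is a limit of the statement that a Sperner
coloring of the grid points of a simplex has points of all colors close together. The latter holds
without any triangulation: order the points by each coordinate and double count, modulo 2, Scarf's
dominating sets and their facets.
-/

open Finset Real Filter

noncomputable def contract {N : ℕ} {m : Fin N → ℕ}
    (T : (∀ i, Fin (m i)) → ℝ) (x : ∀ i, Fin (m i) → ℝ) : ℝ :=
  ∑ K : ∀ i, Fin (m i), T K * ∏ i, x i (K i)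

def stdSimplex' (n : ℕ) : Set (Fin n → ℝ) :=
  {x | (∀ k, 0 ≤ x k) ∧ ∑ k, x k = 1}

section Coloring

variable {α β : Type*} [DecidableEq α] [DecidableEq β] {f : α → β} {s : Finset α}

theorem image_erase_eq_image {a b : α} (hb : b ∈ s) (hab : a ≠ b) (h : f a = f b) :
    (s.erase a).image f = s.image f := by
  by_cases ha : a ∈ s
  · have hmem : f a ∈ (s.erase a).image f :=
      h ▸ mem_image_of_mem f (mem_erase.2 ⟨hab.symm, hb⟩)
    rw [← insert_eq_of_mem hmem, ← image_insert, insert_erase ha]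
  · rw [erase_eq_of_notMem ha]

theorem card_filter_image_erase_eq_image (hs : #s = #(s.image f) + 1) :
    #{a ∈ s | (s.erase a).image f = s.image f} = 2 := by
  obtain ⟨a, ha, b, hb, hab, hf⟩ :=
    exists_ne_map_eq_of_card_lt_of_maps_to (s := s) (t := s.image f) (by omega)
      fun _ hx => mem_image_of_mem f hx
  refine card_eq_two.2 ⟨a, b, hab, ?_⟩
  ext z
  simp only [mem_filter, mem_insert, mem_singleton]
  constructor
  · rintro ⟨hz, himage⟩
    have hinj : Set.InjOn f (s.erase z) :=
      injOn_of_card_image_eq (by rw [himage, card_erase_of_mem hz]; omega)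
    by_contra! hne
    exact hab (hinj (by simp [ha, hne.1.symm]) (by simp [hb, hne.2.symm]) hf)
  · rintro (rfl | rfl)
    · exact ⟨ha, image_erase_eq_image hb hab hf⟩
    · exact ⟨hb, image_erase_eq_image ha hab.symm hf.symm⟩

theorem even_card_filter_image_erase_eq [Fintype β] (hs : #s = Fintype.card β)
    (hf : s.image f ≠ univ) (b : β) : Even #{a ∈ s | (s.erase a).image f = univ.erase b} := by
  by_cases himage : s.image f = univ.erase b
  · have hcard : #s = #(s.image f) + 1 := by
      rw [himage, card_erase_add_one (mem_univ b), card_univ, hs]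
    rw [← himage, card_filter_image_erase_eq_image hcard]
    exact even_two
  · rw [filter_false_of_mem, card_empty]
    · exact Even.zero
    · intro a _ ha
      have hsub : univ.erase b ⊆ s.image f := ha ▸ image_subset_image (erase_subset a s)
      have hb : b ∉ s.image f := fun hb =>
        hf (univ_subset_iff.1 (insert_erase (mem_univ b) ▸ insert_subset hb hsub))
      exact himage ((subset_erase.2 ⟨subset_univ _, hb⟩).antisymm hsub)

theorem sum_card_filter_erase_eq_sum_card_filter_insert [Fintype α] (P Q : Finset α → Prop)
    [DecidablePred P] [DecidablePred Q] :
    ∑ τ with P τ, #{x ∈ τ | Q (τ.erase x)} = ∑ ρ with Q ρ, #{y | y ∉ ρ ∧ P (insert y ρ)} := by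
  simp_rw [← card_sigma]
  refine card_nbij' (fun p => ⟨p.1.erase p.2, p.2⟩) (fun p => ⟨insert p.2 p.1, p.2⟩) ?_ ?_ ?_ ?_
  all_goals
    rintro ⟨ρ, x⟩ h
    simp_all

end Coloring

section Dominating

variable {ι V α : Type*} [LinearOrder α] {u : ι → V → α}

/-- A set of points is dominating (in Scarf's sense, for the orders given by the utilities `u i`)
if no point lies strictly below its upper corner, that is, below the maximum of `u i` over the set
for every `i` at once. -/
def IsDominating (u : ι → V → α) (τ : Finset V) : Prop :=
  ∀ y, ∃ i, ∀ x ∈ τ, u i x ≤ u i y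

/-- `m` selects for every `i` a maximizer of `u i` over `τ`; together these points describe the
upper corner of `τ`. -/
def IsMaxSelector (u : ι → V → α) (τ : Finset V) (m : ι → V) : Prop :=
  ∀ i, m i ∈ τ ∧ ∀ x ∈ τ, u i x ≤ u i (m i)

theorem exists_isMaxSelector (u : ι → V → α) {τ : Finset V} (hτ : τ.Nonempty) :
    ∃ m, IsMaxSelector u τ m := by
  choose m hmem hmax using fun i => τ.exists_max_image (u i) hτ
  exact ⟨m, fun i => ⟨hmem i, hmax i⟩⟩

namespace IsDominating

theorem mono {ρ τ : Finset V} (hτ : IsDominating u τ) (h : ρ ⊆ τ) : IsDominating u ρ := fun y =>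
  (hτ y).imp fun _ hi x hx => hi x (h hx)

variable {ρ : Finset V} {m : ι → V}

theorem not_forall_lt (hd : IsDominating u ρ) (hm : IsMaxSelector u ρ m) (y : V) :
    ¬ ∀ i, u i y < u i (m i) := fun h =>
  let ⟨i, hi⟩ := hd y
  (hi _ (hm i).1).not_gt (h i)

theorem image_eq [Fintype ι] [DecidableEq V] (hu : ∀ i, Function.Injective (u i))
    (hd : IsDominating u ρ) (hm : IsMaxSelector u ρ m) : univ.image m = ρ := by
  ext y
  simp only [mem_image, mem_univ, true_and]
  refine ⟨fun ⟨i, hi⟩ => hi ▸ (hm i).1, fun hy => ?_⟩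
  obtain ⟨i, hi⟩ := hd y
  exact ⟨i, hu i (((hm i).2 y hy).antisymm' (hi _ (hm i).1))⟩

theorem exists_insert [Finite V] [DecidableEq V]
    (hd : IsDominating u ρ) (hm : IsMaxSelector u ρ m) {k : ι}
    (hne : ∃ y, ∀ l ≠ k, u l y < u l (m l)) :
    ∃ y, (∀ l ≠ k, u l y < u l (m l)) ∧ IsDominating u (insert y ρ) := by
  obtain ⟨y, hy, hmin⟩ :=
    Set.exists_min_image {y | ∀ l ≠ k, u l y < u l (m l)} (u k) (Set.toFinite _) hne
  refine ⟨y, hy, fun z => ?_⟩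
  by_cases hz : ∀ l ≠ k, u l z < u l (m l)
  · refine ⟨k, forall_mem_insert _ _ _ |>.2 ⟨hmin z hz, ?_⟩⟩
    obtain ⟨l, hl⟩ := hd z
    obtain rfl : l = k := by
      by_contra hlk
      exact (hl _ (hm l).1).not_gt (hz l hlk)
    exact hl
  · push Not at hz
    obtain ⟨l, hlk, hl⟩ := hz
    exact ⟨l, forall_mem_insert _ _ _ |>.2
      ⟨(hy l hlk).le.trans hl, fun x hx => ((hm l).2 x hx).trans hl⟩⟩

theorem eq_of_insert [DecidableEq V] (hu : ∀ i, Function.Injective (u i))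
    (hm : IsMaxSelector u ρ m) {k : ι} {y z : V}
    (hy : ∀ l ≠ k, u l y < u l (m l)) (hz : ∀ l ≠ k, u l z < u l (m l))
    (hdy : IsDominating u (insert y ρ)) (hdz : IsDominating u (insert z ρ)) : y = z := by
  have le_of_insert {a b : V} (hb : ∀ l ≠ k, u l b < u l (m l))
      (hda : IsDominating u (insert a ρ)) : u k a ≤ u k b := by
    obtain ⟨l, hl⟩ := hda b
    obtain rfl : l = k := by
      by_contra hlk
      exact (hl _ (mem_insert_of_mem (hm l).1)).not_gt (hb l hlk)
    exact hl a (mem_insert_self a ρ)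
  exact hu k ((le_of_insert hz hdy).antisymm (le_of_insert hy hdz))

theorem exists_index_of_insert [Fintype ι] [DecidableEq ι] [DecidableEq V]
    (hu : ∀ i, Function.Injective (u i)) (hm : IsMaxSelector u ρ m)
    (hcard : #ρ + 1 = Fintype.card ι) {y : V} (hy : y ∉ ρ) (hd : IsDominating u (insert y ρ)) :
    ∃ k, (univ.erase k).image m = ρ ∧ ∀ l ≠ k, u l y < u l (m l) := by
  obtain ⟨m', hm'⟩ := exists_isMaxSelector u (insert_nonempty y ρ)
  have himage : univ.image m' = insert y ρ := hd.image_eq hu hm'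
  have hinj : Function.Injective m' := by
    rw [← Set.injOn_univ, ← coe_univ]
    refine injOn_of_card_image_eq ?_
    rw [himage, card_insert_of_notMem hy, hcard, card_univ]
  obtain ⟨k, -, hk⟩ := mem_image.1 (himage ▸ mem_insert_self y ρ)
  have heq : ∀ l ≠ k, m' l = m l := fun l hl => by
    have hmem : m' l ∈ ρ :=
      mem_of_mem_insert_of_ne (hm' l).1 fun h => hl (hinj (h.trans hk.symm))
    exact hu l (((hm l).2 _ hmem).antisymm ((hm' l).2 _ (mem_insert_of_mem (hm l).1)))
  refine ⟨k, ?_, fun l hl => ?_⟩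
  · calc (univ.erase k).image m = (univ.erase k).image m' :=
          image_congr fun l hl => (heq l (by simpa using hl)).symm
      _ = ρ := by rw [image_erase hinj, himage, hk, erase_insert hy]
  · rw [← heq l hl]
    refine ((hm' l).2 y (mem_insert_self y ρ)).lt_of_ne fun h => hl (hinj ?_)
    rw [hk, hu l h]

theorem card_filter_insert [Fintype ι] [Fintype V] [DecidableEq V]
    (hu : ∀ i, Function.Injective (u i)) (hd : IsDominating u ρ) (hm : IsMaxSelector u ρ m)
    (hcard : #ρ + 1 = Fintype.card ι) (hne : ∀ k, ∃ y, ∀ l ≠ k, u l y < u l (m l))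
    [DecidablePred (IsDominating u)] :
    #{y | y ∉ ρ ∧ IsDominating u (insert y ρ)} = 2 := by
  classical
  have himage : univ.image m = ρ := hd.image_eq hu hm
  choose v hv hdv using fun k => hd.exists_insert hm (hne k)
  rw [← card_filter_image_erase_eq_image (s := univ) (f := m) (by rw [himage, hcard, card_univ])]
  symm
  refine card_bij (fun k _ => v k) (fun k hk => ?_) (fun k _ k' _ h => ?_) fun y hy => ?_
  · simp only [himage, mem_filter, mem_univ, true_and] at hk ⊢
    refine ⟨fun hvρ => ?_, hdv k⟩
    obtain ⟨l, hl, hlv⟩ := mem_image.1 (hk ▸ hvρ)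
    exact (hv k l (ne_of_mem_erase hl)).ne (by rw [hlv])
  · by_contra hkk'
    refine hd.not_forall_lt hm (v k) fun l => ?_
    obtain rfl | hl := eq_or_ne l k
    · exact h ▸ hv k' l hkk'
    · exact hv k l hl
  · obtain ⟨hyρ, hdy⟩ := (mem_filter.1 hy).2
    obtain ⟨k, hk, hyk⟩ := exists_index_of_insert hu hm hcard hyρ hdy
    exact ⟨k, by simpa [himage] using hk, eq_of_insert hu hm (hv k) hyk (hdv k) hdy⟩

end IsDominating

/-- Scarf's slack points: `s i` is the largest point for `u i`, and the other slack points are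
smaller for `u i` than all points outside the range of `s`. -/
structure IsSlack (u : ι → V → α) (s : ι → V) : Prop where
  le_self (i : ι) (v : V) : u i v ≤ u i (s i)
  lt_of_ne {i j : ι} (hij : j ≠ i) {v : V} (hv : v ∉ Set.range s) : u i (s j) < u i v

namespace IsSlack

variable {s : ι → V}

theorem lt_self (hs : IsSlack u s) (hu : ∀ i, Function.Injective (u i)) (i : ι) {v : V}
    (hv : v ∉ Set.range s) : u i v < u i (s i) :=
  (hs.le_self i v).lt_of_ne fun h => hv ⟨i, (hu i h).symm⟩

variable [Fintype ι]

section Counting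

variable [DecidableEq V]

theorem even_card_filter_insert [Fintype V] [DecidablePred (IsDominating u)] (hs : IsSlack u s)
    (hu : ∀ i, Function.Injective (u i)) {ρ : Finset V} {r : V} (hr : r ∈ ρ)
    (hrs : r ∉ Set.range s) :
    Even #{y | y ∉ ρ ∧ #(insert y ρ) = Fintype.card ι ∧ IsDominating u (insert y ρ)} := by
  by_cases h : ∃ y, y ∉ ρ ∧ #(insert y ρ) = Fintype.card ι ∧ IsDominating u (insert y ρ)
  · obtain ⟨y, hy, hcard, hdy⟩ := h
    rw [card_insert_of_notMem hy] at hcard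
    obtain ⟨m, hm⟩ := exists_isMaxSelector u ⟨r, hr⟩
    have hne (k : ι) : ∃ y, ∀ l ≠ k, u l y < u l (m l) :=
      ⟨s k, fun l hl => (hs.lt_of_ne hl.symm hrs).trans_le ((hm l).2 r hr)⟩
    have hfilter (z : V) : z ∉ ρ ∧ #(insert z ρ) = Fintype.card ι ∧ IsDominating u (insert z ρ) ↔
        z ∉ ρ ∧ IsDominating u (insert z ρ) :=
      and_congr_right fun hz => by simp [card_insert_of_notMem hz, hcard]
    simp_rw [hfilter, (hdy.mono (subset_insert y ρ)).card_filter_insert hu hm hcard hne]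
    exact even_two
  · push Not at h
    rw [filter_false_of_mem fun y _ hy => h y hy.1 hy.2.1 hy.2.2, card_empty]
    exact Even.zero

variable [DecidableEq ι]

theorem isDominating_insert_iff (hs : IsSlack u s) (hu : ∀ i, Function.Injective (u i)) (i : ι)
    {t : V} (ht : t ∉ Set.range s) (hmin : ∀ v ∉ Set.range s, u i t ≤ u i v) {y : V} :
    y ∉ (univ.erase i).image s ∧ IsDominating u (insert y ((univ.erase i).image s)) ↔ y = t := by
  constructor
  · rintro ⟨hy, hdy⟩
    have hle {v : V} (hv : v ∉ Set.range s) : u i y ≤ u i v := by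
      obtain ⟨j, hj⟩ := hdy v
      obtain rfl : j = i := by
        by_contra hji
        have hmem : s j ∈ insert y ((univ.erase i).image s) :=
          mem_insert_of_mem (mem_image_of_mem s (by simpa using hji))
        exact (hj _ hmem).not_gt (hs.lt_self hu j hv)
      exact hj y (mem_insert_self _ _)
    have hys : y ∉ Set.range s := by
      rintro ⟨j, rfl⟩
      obtain rfl | hji := eq_or_ne j i
      · exact (hle ht).not_gt (hs.lt_self hu j ht)
      · exact hy (mem_image_of_mem s (by simpa using hji))
    exact hu i ((hle ht).antisymm (hmin y hys))
  · rintro rfl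
    refine ⟨fun hy => ht ?_, fun z => ?_⟩
    · obtain ⟨j, -, hj⟩ := mem_image.1 hy
      exact ⟨j, hj⟩
    · by_cases hz : z ∈ Set.range s
      · obtain ⟨j, rfl⟩ := hz
        exact ⟨j, fun x _ => hs.le_self j x⟩
      · refine ⟨i, forall_mem_insert _ _ _ |>.2 ⟨hmin z hz, forall_mem_image.2 fun j hj => ?_⟩⟩
        exact (hs.lt_of_ne (ne_of_mem_erase hj) hz).le

theorem card_filter_insert_image_erase [Fintype V] [DecidablePred (IsDominating u)]
    (hs : IsSlack u s) (hu : ∀ i, Function.Injective (u i)) (hinj : Function.Injective s) (i : ι)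
    {v : V} (hv : v ∉ Set.range s) :
    #{y | y ∉ (univ.erase i).image s ∧ #(insert y ((univ.erase i).image s)) = Fintype.card ι ∧
      IsDominating u (insert y ((univ.erase i).image s))} = 1 := by
  obtain ⟨t, ht, hmin⟩ := Set.exists_min_image (Set.range s)ᶜ (u i) (Set.toFinite _) ⟨v, hv⟩
  have hcard {y : V} (hy : y ∉ (univ.erase i).image s) :
      #(insert y ((univ.erase i).image s)) = Fintype.card ι := by
    rw [card_insert_of_notMem hy, card_image_of_injective _ hinj, card_erase_add_one (mem_univ i),
      card_univ]
  refine card_eq_one.2 ⟨t, ?_⟩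
  ext y
  rw [mem_filter, mem_singleton, ← hs.isDominating_insert_iff hu i ht hmin]
  simp +contextual [hcard]

end Counting

/-- Count the pairs of a dominating set of `card ι` points and one of its facets colored by all
colors but `i`. Each such set, and each such facet other than the one formed by the slack points,
occurs an even number of times, while the facet of slack points occurs once. -/
theorem exists_isDominating_image_eq_univ [DecidableEq ι] [Finite V] (hs : IsSlack u s)
    (hu : ∀ i, Function.Injective (u i)) {c : V → ι} (hc : Function.LeftInverse c s) {v : V}
    (hv : v ∉ Set.range s) : ∃ τ, IsDominating u τ ∧ τ.image c = univ := by
  classical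
  have := Fintype.ofFinite V
  by_contra! h
  set i := c v
  have hcount := sum_card_filter_erase_eq_sum_card_filter_insert
    (fun τ => #τ = Fintype.card ι ∧ IsDominating u τ) (fun ρ => ρ.image c = univ.erase i)
  have hsets : Even (∑ τ with #τ = Fintype.card ι ∧ IsDominating u τ,
      #{x ∈ τ | (τ.erase x).image c = univ.erase i}) :=
    even_sum _ fun τ hτ => by
      obtain ⟨hcard, hd⟩ := (mem_filter.1 hτ).2
      exact even_card_filter_image_erase_eq hcard (h τ hd) i
  have hslack : (univ.erase i).image s ∈ ({ρ | ρ.image c = univ.erase i} : Finset (Finset V)) := by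
    simp [image_image, hc.comp_eq_id]
  rw [hcount, ← add_sum_erase _ _ hslack,
    hs.card_filter_insert_image_erase hu hc.injective i hv] at hsets
  have hfacets : Even (∑ ρ ∈ ({ρ | ρ.image c = univ.erase i} : Finset (Finset V)).erase
      ((univ.erase i).image s),
      #{y | y ∉ ρ ∧ #(insert y ρ) = Fintype.card ι ∧ IsDominating u (insert y ρ)}) := by
    refine even_sum _ fun ρ hρ => ?_
    obtain ⟨hne, hρ⟩ := mem_erase.1 hρ
    obtain ⟨r, hr, hrs⟩ : ∃ r ∈ ρ, r ∉ Set.range s := by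
      by_contra! hrange
      have hsc : ∀ x ∈ ρ, (s ∘ c) x = id x := fun x hx => by
        obtain ⟨j, rfl⟩ := hrange x hx
        exact congrArg s (hc j)
      refine hne ?_
      rw [← (mem_filter.1 hρ).2, image_image, image_congr hsc, image_id]
    exact hs.even_card_filter_insert hu hr hrs
  exact absurd hsets (by simpa [Nat.even_add] using hfacets)

end IsSlack

theorem exists_injective_refinement [Finite V] (u : ι → V → α) :
    ∃ w : ι → V → α ×ₗ Fin (Nat.card V),
      (∀ i, Function.Injective (w i)) ∧ ∀ i x y, u i x < u i y → w i x < w i y := by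
  have e := Finite.equivFin V
  refine ⟨fun i x => toLex (u i x, e x), fun i x y h => e.injective ?_, fun i x y h =>
    Prod.Lex.toLex_lt_toLex.2 (Or.inl h)⟩
  exact congrArg (fun p => (ofLex p).2) h

theorem exists_isSlack_inr [Finite ι] [Finite V] (u : ι → V → α) :
    ∃ w : ι → V ⊕ ι → WithBot (WithTop α) ×ₗ Fin (Nat.card (V ⊕ ι)),
      (∀ i, Function.Injective (w i)) ∧ IsSlack w Sum.inr ∧
        ∀ i x y, u i x < u i y → w i (Sum.inl x) < w i (Sum.inl y) := by
  classical
  let h : ι → V ⊕ ι → WithBot (WithTop α) := fun i =>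
    Sum.elim (fun v => ((u i v : WithTop α) : WithBot (WithTop α))) fun j =>
      if j = i then ⊤ else ⊥
  obtain ⟨w, hw, hlt⟩ := exists_injective_refinement h
  refine ⟨w, hw, ⟨fun i => ?_, ?_⟩, fun i x y hxy => hlt i _ _ (by simpa [h] using hxy)⟩
  · rintro (y | j)
    · exact (hlt i _ _ (by simp [h, ← WithBot.coe_top])).le
    · obtain rfl | hji := eq_or_ne j i
      · exact le_rfl
      · exact (hlt i _ _ (by simp [h, hji])).le
  · rintro i j hji (y | k) hv
    · exact hlt i _ _ (by simp [h, hji])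
    · exact absurd ⟨k, rfl⟩ hv

theorem exists_forall_exists_le_color [Finite ι] [Finite V] (u : ι → V → α) (c : V → ι) :
    ∃ σ : Finset V, ∀ y, ∃ z ∈ σ, ∀ x ∈ σ, u (c z) x ≤ u (c z) y := by
  classical
  have := Fintype.ofFinite ι
  obtain _ | ⟨⟨v⟩⟩ := isEmpty_or_nonempty V
  · exact ⟨∅, isEmptyElim⟩
  obtain ⟨w, hw, hslack, hlt⟩ := exists_isSlack_inr u
  obtain ⟨τ, hτ, himage⟩ := hslack.exists_isDominating_image_eq_univ hw
    (c := Sum.elim c id) (fun _ => rfl) (v := Sum.inl v) (by simp)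
  refine ⟨τ.toLeft, fun y => ?_⟩
  obtain ⟨i, hi⟩ := hτ (Sum.inl y)
  obtain ⟨z | j, hz, hzi⟩ := mem_image.1 (himage ▸ mem_univ i)
  · obtain rfl : c z = i := hzi
    refine ⟨z, mem_toLeft.2 hz, fun x hx => ?_⟩
    by_contra! hyx
    exact (hi _ (mem_toLeft.1 hx)).not_gt (hlt _ _ _ hyx)
  · obtain rfl : j = i := hzi
    exact absurd (hi _ hz) (hslack.lt_self hw j (by simp)).not_ge

end Dominating

section Simplex

variable {ι : Type*} [Fintype ι]

theorem exists_le_sum_eq {d : ι → ℕ} {n : ℕ} (h : n ≤ ∑ i, d i) : ∃ a ≤ d, ∑ i, a i = n := by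
  classical
  induction n with
  | zero => exact ⟨0, fun _ => Nat.zero_le _, by simp⟩
  | succ n ih =>
    obtain ⟨a, had, rfl⟩ := ih (by omega)
    obtain ⟨i, -, hi⟩ := exists_lt_of_sum_lt (Nat.lt_of_succ_le h)
    refine ⟨a + Pi.single i 1, fun j => ?_, by simp [sum_add_distrib]⟩
    obtain rfl | hji := eq_or_ne j i
    · simpa using hi
    · simpa [hji] using had j

theorem exists_forall_lt_sum_eq {d : ι → ℕ} (hd : ∀ i, 0 < d i) {n : ℕ}
    (h : n + Fintype.card ι ≤ ∑ i, d i) : ∃ a : ι → ℕ, (∀ i, a i < d i) ∧ ∑ i, a i = n := by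
  have hpred : ∑ i, d i = ∑ i, (d i - 1) + Fintype.card ι := by
    rw [← card_univ, card_eq_sum_ones, ← sum_add_distrib]
    exact sum_congr rfl fun i _ => (Nat.sub_add_cancel (hd i)).symm
  obtain ⟨a, had, ha⟩ := exists_le_sum_eq (d := fun i => d i - 1) (n := n) (by omega)
  exact ⟨a, fun i => Nat.lt_of_le_pred (hd i) (had i), ha⟩

theorem apply_le_add_of_sum_le {a b d : ι → ℕ} {n : ℕ} (ha : a ≤ d) (hb : b ≤ d)
    (h : ∑ i, d i ≤ ∑ i, b i + n) (k : ι) : a k ≤ b k + n := by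
  classical
  have hrest : d k + ∑ i ∈ univ.erase k, b i ≤ ∑ i, b i + n :=
    calc d k + ∑ i ∈ univ.erase k, b i ≤ d k + ∑ i ∈ univ.erase k, d i := by
          gcongr with i
          exact hb i
      _ = ∑ i, d i := add_sum_erase univ d (mem_univ k)
      _ ≤ ∑ i, b i + n := h
  rw [← add_sum_erase univ b (mem_univ k)] at hrest
  have hak : a k ≤ d k := ha k
  omega

/-- Take the utilities to be the coordinates: the coordinatewise maxima of a dominating set must
have sum less than `K + card ι`, or a grid point would lie strictly below all of them. -/
theorem exists_rainbow_grid_points (K : ℕ) (c : (ι → ℕ) → ι)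
    (hc : ∀ a : ι → ℕ, ∑ i, a i = K → 0 < a (c a)) :
    ∃ q : ι → ι → ℕ, (∀ i, ∑ k, q i k = K) ∧ (∀ i, c (q i) = i) ∧
      ∀ i j k, q i k ≤ q j k + Fintype.card ι := by
  classical
  have hmem {a : ι → ℕ} : a ∈ piAntidiag univ K ↔ ∑ i, a i = K := by simp
  obtain ⟨σ, hσ⟩ := exists_forall_exists_le_color
    (fun i (a : piAntidiag (univ : Finset ι) K) => a.1 i) (fun a => c a.1)
  have hcolor (i : ι) : ∃ a ∈ σ, c a.1 = i := by
    obtain ⟨z, hz, hle⟩ := hσ ⟨Pi.single i K, hmem.2 (by simp)⟩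
    refine ⟨z, hz, ?_⟩
    by_contra hne
    have hzero : z.1 (c z.1) = 0 := by simpa [hne] using hle z hz
    exact (hc _ (hmem.1 z.2)).ne' hzero
  choose q hqσ hqc using hcolor
  have hsum (i : ι) : ∑ k, (q i).1 k = K := hmem.1 (q i).2
  let M : ι → ℕ := σ.sup Subtype.val
  have hM {a : piAntidiag (univ : Finset ι) K} (ha : a ∈ σ) : a.1 ≤ M :=
    le_sup (f := Subtype.val) ha
  have hMpos (k : ι) : 0 < M k := by
    have hpos := hc _ (hsum k)
    rw [hqc] at hpos
    exact hpos.trans_le (hM (hqσ k) k)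
  have hMsum : ∑ k, M k < K + Fintype.card ι := by
    by_contra! hge
    obtain ⟨y, hy, hysum⟩ := exists_forall_lt_sum_eq hMpos hge
    obtain ⟨z, -, hle⟩ := hσ ⟨y, hmem.2 hysum⟩
    refine (hy (c z.1)).not_ge ?_
    simpa [M, Finset.sup_apply] using hle
  exact ⟨fun i => (q i).1, hsum, hqc, fun i j =>
    apply_le_add_of_sum_le (hM (hqσ i)) (hM (hqσ j)) (by rw [hsum]; exact hMsum.le)⟩

theorem exists_rainbow_points [Nonempty ι] {F : ι → Set (ι → ℝ)}
    (hF : ∀ x ∈ stdSimplex ℝ ι, ∃ i, 0 < x i ∧ x ∈ F i) (n : ℕ) :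
    ∃ q : ι → ι → ℝ, (∀ i, q i ∈ stdSimplex ℝ ι) ∧ (∀ i, q i ∈ F i) ∧
      ∀ i j, dist (q i) (q j) ≤ Fintype.card ι * (1 / ((n : ℝ) + 1)) := by
  let x : (ι → ℕ) → ι → ℝ := fun a i => a i / ((n : ℝ) + 1)
  have hn : (0 : ℝ) < n + 1 := by positivity
  have hx {a : ι → ℕ} (ha : ∑ i, a i = n + 1) : x a ∈ stdSimplex ℝ ι := by
    refine ⟨fun i => by positivity, ?_⟩
    rw [← sum_div, ← Nat.cast_sum, ha, Nat.cast_add_one, div_self hn.ne']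
  have hcolor (a : ι → ℕ) : ∃ i, ∑ i, a i = n + 1 → 0 < x a i ∧ x a ∈ F i := by
    by_cases ha : ∑ i, a i = n + 1
    · exact (hF _ (hx ha)).imp fun _ h _ => h
    · exact ⟨Classical.arbitrary ι, fun h => absurd h ha⟩
  choose c hc using hcolor
  obtain ⟨q, hsum, hqc, hq⟩ := exists_rainbow_grid_points (n + 1) c fun a ha => by
    simpa [x, div_pos_iff_of_pos_right hn] using (hc a ha).1
  refine ⟨fun i => x (q i), fun i => hx (hsum i), fun i => ?_, fun i j => ?_⟩
  · simpa [hqc] using (hc _ (hsum i)).2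
  · refine (dist_pi_le_iff (by positivity)).2 fun k => ?_
    have hij : (q i k : ℝ) ≤ q j k + Fintype.card ι := mod_cast hq i j k
    have hji : (q j k : ℝ) ≤ q i k + Fintype.card ι := mod_cast hq j i k
    rw [Real.dist_eq, ← sub_div, abs_div, abs_of_pos hn, mul_one_div]
    gcongr
    exact abs_sub_le_iff.2 ⟨by linarith, by linarith⟩

theorem exists_mem_stdSimplex_forall_mem [Nonempty ι] {F : ι → Set (ι → ℝ)}
    (hclosed : ∀ i, IsClosed (F i)) (hF : ∀ x ∈ stdSimplex ℝ ι, ∃ i, 0 < x i ∧ x ∈ F i) :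
    ∃ x ∈ stdSimplex ℝ ι, ∀ i, x ∈ F i := by
  choose q hqΔ hqF hdist using exists_rainbow_points hF
  let i₀ := Classical.arbitrary ι
  obtain ⟨x, hx, φ, hφ, hlim⟩ := (isCompact_stdSimplex ℝ ι).tendsto_subseq fun n => hqΔ n i₀
  have hmesh : Tendsto (fun n : ℕ => (Fintype.card ι : ℝ) * (1 / ((φ n : ℝ) + 1))) atTop
      (nhds 0) := by
    simpa using ((tendsto_one_div_add_atTop_nhds_zero_nat (𝕜 := ℝ)).comp
      hφ.tendsto_atTop).const_mul (Fintype.card ι : ℝ)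
  refine ⟨x, hx, fun i => (hclosed i).mem_of_tendsto (b := atTop) (f := fun n => q (φ n) i) ?_
    (Eventually.of_forall fun n => hqF (φ n) i)⟩
  exact hlim.congr_dist (squeeze_zero (fun _ => dist_nonneg) (fun n => hdist (φ n) i₀ i) hmesh)

end Simplex

section KyFan

variable {E β : Type*} [AddCommGroup E] [Module ℝ E] [TopologicalSpace E] [ContinuousAdd E]
  [ContinuousSMul ℝ E] [LinearOrder β] {K : Set E} {φ : E → E → β} {c : β}

theorem exists_mem_forall_le_of_finite (hconv : Convex ℝ K)
    (hlsc : ∀ y ∈ K, LowerSemicontinuousOn (fun x => φ x y) K)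
    (hqc : ∀ x ∈ K, QuasiconcaveOn ℝ K (φ x)) (hdiag : ∀ x ∈ K, φ x x ≤ c)
    {ι : Type*} [Finite ι] [Nonempty ι] {v : ι → E} (hv : ∀ i, v i ∈ K) :
    ∃ x ∈ K, ∀ i, φ x (v i) ≤ c := by
  have := Fintype.ofFinite ι
  let comb : (ι → ℝ) → E := fun w => ∑ i, w i • v i
  have hcomb : Continuous comb := by fun_prop
  have hcombK : Set.MapsTo comb (stdSimplex ℝ ι) K := fun w hw =>
    hconv.sum_mem (fun i _ => hw.1 i) hw.2 fun i _ => hv i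
  have hclosed (i : ι) : IsClosed (stdSimplex ℝ ι ∩ {w | φ (comb w) (v i) ≤ c}) :=
    (((hlsc _ (hv i)).comp hcomb.continuousOn hcombK).isCompact_inter_preimage_Iic
      (isCompact_stdSimplex ℝ ι) c).isClosed
  obtain ⟨w, hw, hwF⟩ := exists_mem_stdSimplex_forall_mem hclosed fun w hw => by
    by_contra! hpos
    have hgt (i : ι) (hi : w i ≠ 0) : v i ∈ {y ∈ K | c < φ (comb w) y} :=
      ⟨hv i, not_le.1 fun hle => hpos i ((hw.1 i).lt_of_ne' hi) ⟨hw, hle⟩⟩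
    have hcomb_gt := ((hqc _ (hcombK hw)).convex_gt c).finsum_mem (w := w) (z := v) hw.1
      (by rw [finsum_eq_sum_of_fintype, hw.2]) hgt
    rw [finsum_eq_sum_of_fintype] at hcomb_gt
    exact hcomb_gt.2.not_ge (hdiag _ (hcombK hw))
  exact ⟨comb w, hcombK hw, fun i => (hwF i).2⟩

theorem kyFan_inequality (hK : IsCompact K) (hconv : Convex ℝ K) (hne : K.Nonempty)
    (hlsc : ∀ y ∈ K, LowerSemicontinuousOn (fun x => φ x y) K)
    (hqc : ∀ x ∈ K, QuasiconcaveOn ℝ K (φ x)) (hdiag : ∀ x ∈ K, φ x x ≤ c) :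
    ∃ x ∈ K, ∀ y ∈ K, φ x y ≤ c := by
  by_contra! hempty
  obtain ⟨t, ht⟩ := (LowerSemicontinuousOn.inter_biInter_preimage_Iic_eq_empty_iff_exists_finset
    (c := c) hK hlsc).1 <| Set.eq_empty_iff_forall_notMem.2 fun x hx => by
      obtain ⟨y, hy, hlt⟩ := hempty x hx.1
      exact hlt.not_ge (Set.mem_iInter₂.1 hx.2 y hy)
  obtain ⟨x₀, hx₀⟩ := hne
  obtain ⟨y₀, hy₀, -⟩ := ht x₀ hx₀
  have : Nonempty t := ⟨⟨y₀, hy₀⟩⟩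
  obtain ⟨x, hx, hle⟩ := exists_mem_forall_le_of_finite hconv hlsc hqc hdiag
    (v := fun y : t => (y.1 : E)) fun y => y.1.2
  obtain ⟨y, hy, hlt⟩ := ht x hx
  exact hlt.not_ge (hle ⟨y, hy⟩)

end KyFan

theorem concaveOn_sum {ι E : Type*} [AddCommGroup E] [Module ℝ E] {K : Set E} {f : ι → E → ℝ}
    {s : Finset ι} (hK : Convex ℝ K) (hf : ∀ i ∈ s, ConcaveOn ℝ K (f i)) :
    ConcaveOn ℝ K (fun x => ∑ i ∈ s, f i x) := by
  simp_rw [← Finset.sum_apply]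
  exact sum_induction f (ConcaveOn ℝ K) (fun _ _ => ConcaveOn.add) (concaveOn_const 0 hK) hf

section Nash

variable {I : Type*} [DecidableEq I] {E : I → Type*} {c : I → (∀ i, E i) → ℝ} {K : ∀ i, Set (E i)}

section NikaidoIsoda

variable [Fintype I] {x : ∀ i, E i}

/-- The Nikaido–Isoda function of a game with costs `c`: the sum over the players of what each saves
by replacing its own strategy in the profile `x` with the one prescribed by `y`. -/
def nikaidoIsoda (c : I → (∀ i, E i) → ℝ) (x y : ∀ i, E i) : ℝ :=
  ∑ i, (c i x - c i (Function.update x i (y i)))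

theorem nikaidoIsoda_self : nikaidoIsoda c x x = 0 := by
  simp [nikaidoIsoda]

theorem nikaidoIsoda_update (i : I) (y : E i) :
    nikaidoIsoda c x (Function.update x i y) = c i x - c i (Function.update x i y) := by
  refine (sum_eq_single i (fun j _ hj => ?_) (by simp)).trans (by simp)
  simp [hj]

theorem continuousOn_nikaidoIsoda [∀ i, TopologicalSpace (E i)]
    (hc : ∀ i, ContinuousOn (c i) (Set.univ.pi K)) {y : ∀ i, E i} (hy : y ∈ Set.univ.pi K) :
    ContinuousOn (fun x => nikaidoIsoda c x y) (Set.univ.pi K) := by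
  refine continuousOn_finsetSum _ fun i _ => (hc i).sub ((hc i).comp ?_ fun x hx => ?_)
  · exact (continuous_id.update i continuous_const).continuousOn
  · exact (Set.update_mem_pi_iff_of_mem hx).2 fun _ => hy i trivial

theorem concaveOn_nikaidoIsoda [∀ i, AddCommGroup (E i)] [∀ i, Module ℝ (E i)]
    (hK : ∀ i, Convex ℝ (K i))
    (hc : ∀ i, ConvexOn ℝ (K i) fun y => c i (Function.update x i y)) :
    ConcaveOn ℝ (Set.univ.pi K) (nikaidoIsoda c x) := by
  have hpi : Convex ℝ (Set.univ.pi K) := convex_pi fun i _ => hK i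
  refine concaveOn_sum hpi fun i _ => (concaveOn_const _ hpi).sub ?_
  exact ((hc i).comp_linearMap (LinearMap.proj i)).subset (fun y hy => hy i trivial) hpi

end NikaidoIsoda

theorem exists_nash_equilibrium_of_convexOn [Finite I] [∀ i, AddCommGroup (E i)]
    [∀ i, Module ℝ (E i)] [∀ i, TopologicalSpace (E i)] [∀ i, ContinuousAdd (E i)]
    [∀ i, ContinuousSMul ℝ (E i)]
    (hK : ∀ i, IsCompact (K i)) (hconv : ∀ i, Convex ℝ (K i)) (hne : ∀ i, (K i).Nonempty)
    (hcont : ∀ i, ContinuousOn (c i) (Set.univ.pi K))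
    (hc : ∀ x ∈ Set.univ.pi K, ∀ i, ConvexOn ℝ (K i) fun y => c i (Function.update x i y)) :
    ∃ x, (∀ i, x i ∈ K i) ∧ ∀ i, ∀ y ∈ K i, c i x ≤ c i (Function.update x i y) := by
  have := Fintype.ofFinite I
  obtain ⟨x, hx, hle⟩ := kyFan_inequality (φ := nikaidoIsoda c) (isCompact_univ_pi hK)
    (convex_pi fun i _ => hconv i) (Set.univ_pi_nonempty_iff.2 hne)
    (fun y hy => (continuousOn_nikaidoIsoda hcont hy).lowerSemicontinuousOn)
    (fun x hx => (concaveOn_nikaidoIsoda hconv (hc x hx)).quasiconcaveOn)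
    fun x _ => nikaidoIsoda_self.le
  refine ⟨x, fun i => hx i trivial, fun i y hy => ?_⟩
  have hle := hle _ ((Set.update_mem_pi_iff_of_mem hx).2 fun _ => hy)
  rwa [nikaidoIsoda_update, sub_nonpos] at hle

end Nash

section Contract

variable {N : ℕ} {m : Fin N → ℕ} (T : (∀ i, Fin (m i)) → ℝ)

theorem continuous_contract : Continuous (contract T) := by
  unfold contract
  fun_prop

theorem exists_multilinearMap_coe_eq_contract :
    ∃ f : MultilinearMap ℝ (fun i => Fin (m i) → ℝ) ℝ, ⇑f = contract T := by
  refine ⟨∑ K, T K • (MultilinearMap.mkPiAlgebra ℝ (Fin N) ℝ).compLinearMap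
    fun i => LinearMap.proj (K i), ?_⟩
  ext x
  simp [contract]

theorem convexOn_contract_update (x : ∀ i, Fin (m i) → ℝ) (i : Fin N) {s : Set (Fin (m i) → ℝ)}
    (hs : Convex ℝ s) : ConvexOn ℝ s fun y => contract T (Function.update x i y) := by
  obtain ⟨f, hf⟩ := exists_multilinearMap_coe_eq_contract T
  rw [← hf]
  exact (f.toLinearMap x i).convexOn hs

end Contract

theorem isCompact_stdSimplex' (n : ℕ) : IsCompact (stdSimplex' n) := isCompact_stdSimplex ℝ (Fin n)

theorem convex_stdSimplex' (n : ℕ) : Convex ℝ (stdSimplex' n) := convex_stdSimplex ℝ (Fin n)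

theorem stdSimplex'_nonempty {n : ℕ} (hn : 0 < n) : (stdSimplex' n).Nonempty :=
  ⟨_, single_mem_stdSimplex ℝ (⟨0, hn⟩ : Fin n)⟩

/-- unconstrained special case, Nash's theorem for tensor games:
every finite N-player tensor game has a mixed-strategy equilibrium. -/
theorem tensor_game_has_equilibrium {N : ℕ} {m : Fin N → ℕ}
    (hm : ∀ i, 0 < m i)
    (A : Fin N → (∀ i, Fin (m i)) → ℝ) :
    ∃ x : ∀ i, Fin (m i) → ℝ,
      (∀ i, x i ∈ stdSimplex' (m i)) ∧
      ∀ i, ∀ y ∈ stdSimplex' (m i),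
        contract (A i) x ≤ contract (A i) (Function.update x i y) := by
  exact exists_nash_equilibrium_of_convexOn (fun i => isCompact_stdSimplex' (m i))
    (fun i => convex_stdSimplex' (m i)) (fun i => stdSimplex'_nonempty (hm i))
    (fun i => (continuous_contract (A i)).continuousOn)
    fun x _ i => convexOn_contract_update (A i) x i (convex_stdSimplex' (m i))
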